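/- arXiv:0711.1346 — 2 statements merged into one kernel-verified Lean document; each statement's English description precedes it below -/
import Mathlib

section
/- Let g ≥ 1 and let S_g = ⟨a₁, b₁, …, a_g, b_g | [a₁,b₁]·[a₂,b₂]⋯[a_g,b_g] = 1⟩ be the fundamental group of the closed orientable surface of genus g. Then for any two surjective group homomorphisms φ, ψ : S_g → C₂ onto the group of order 2, there exists an automorphism α of S_g such that φ = ψ ∘ α. -/
/-!
A homomorphism `S_g → C₂` is the same as a function `x : Fin g × Bool → C₂`, because the surface
relation dies in an abelian group. It therefore suffices to move every such nontrivial `x` to the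
single function `stdVec g` (nontrivial on `a₁` only) by automorphisms of the free group which fix
the surface relation, since these descend to `S_g`. This relation between functions is `TwistEquiv`.

Three kinds of Dehn twists are enough. Inside one handle, `a ↦ a b` and `b ↦ b a` fix `[a,b]`
(`twistEquiv_twistA`, `twistEquiv_twistB`), and mod 2 they act transitively on the nonzero vectors
of the handle. For adjacent handles `(a,b)`, `(c,d)`, put `u = b a⁻¹ b⁻¹ c`; then
`[a,b][c,d] = a · u · d c⁻¹ d⁻¹`, and the twist along `u`, that is
`b ↦ u b`, `c ↦ u c u⁻¹`, `d ↦ d u⁻¹`, fixes `u` and the product of the two commutators. Mod 2 it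
adds `a + c` to both `b` and `d` (`twistEquiv_join`). Combined with twists inside the handles, it
clears the later of the two handles while leaving the earlier one nontrivial
(`exists_clear_handle`), so the nontrivial values can be pushed down to the first handle
(`twistEquiv_stdVec`).
-/

/-- The surface relation `[a₁,b₁]·[a₂,b₂]⋯[a_g,b_g]` in the free group on the `2g`
generators `a_i = (i, false)`, `b_i = (i, true)`. -/
def orientableRel (g : ℕ) : FreeGroup (Fin g × Bool) :=
  (((List.finRange g).map fun i =>
    FreeGroup.of (i, false) * FreeGroup.of (i, true) *
      (FreeGroup.of (i, false))⁻¹ * (FreeGroup.of (i, true))⁻¹)).prod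

/-- The fundamental group `S_g` of the closed orientable surface of genus `g`. -/
abbrev OrientableSurfaceGroup (g : ℕ) : Type :=
  PresentedGroup ({orientableRel g} : Set (FreeGroup (Fin g × Bool)))

namespace SurfaceTwist

variable {g : ℕ}

/-! ### Assignments up to automorphisms fixing the surface relation -/

/-- The cyclic group of order 2. -/
abbrev C2 : Type := Multiplicative (ZMod 2)

/-- The nontrivial element of `C2`. -/
abbrev t : C2 := Multiplicative.ofAdd 1

lemma eq_t {c : C2} (h : c ≠ 1) : c = t := by
  revert c; decide

/-- Two assignments of values in `C2` to the generators are equivalent if the induced homomorphisms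
on the free group differ by an automorphism fixing the surface relation. -/
def TwistEquiv (x y : Fin g × Bool → C2) : Prop :=
  ∃ α : FreeGroup (Fin g × Bool) ≃* FreeGroup (Fin g × Bool),
    α (orientableRel g) = orientableRel g ∧ ∀ z, FreeGroup.lift x z = FreeGroup.lift y (α z)

lemma TwistEquiv.refl (x : Fin g × Bool → C2) : TwistEquiv x x :=
  ⟨MulEquiv.refl _, rfl, fun _ => rfl⟩

lemma TwistEquiv.symm {x y : Fin g × Bool → C2} (h : TwistEquiv x y) : TwistEquiv y x := by
  obtain ⟨α, hα, h⟩ := h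
  refine ⟨α.symm, ?_, fun z => ?_⟩
  · rw [MulEquiv.symm_apply_eq, hα]
  · rw [h, MulEquiv.apply_symm_apply]

lemma TwistEquiv.trans {x y z : Fin g × Bool → C2} (h : TwistEquiv x y) (k : TwistEquiv y z) :
    TwistEquiv x z := by
  obtain ⟨α, hα, h⟩ := h
  obtain ⟨β, hβ, k⟩ := k
  exact ⟨α.trans β, by simp [hα, hβ], fun w => by simp [h, k]⟩

/-- An endomorphism of the free group given on generators by `f`, with inverse given by `f'`, is an
automorphism; it acts on assignments by evaluating the words `f`. -/
lemma twistEquiv_of_inverse (f f' : Fin g × Bool → FreeGroup (Fin g × Bool))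
    (h₁ : ∀ p, FreeGroup.lift f' (f p) = FreeGroup.of p)
    (h₂ : ∀ p, FreeGroup.lift f (f' p) = FreeGroup.of p)
    (hrel : FreeGroup.lift f (orientableRel g) = orientableRel g)
    {x y : Fin g × Bool → C2} (hy : ∀ p, y p = FreeGroup.lift x (f p)) : TwistEquiv x y := by
  refine TwistEquiv.symm ⟨MonoidHom.toMulEquiv (FreeGroup.lift f) (FreeGroup.lift f')
    (FreeGroup.ext_hom _ _ fun p => by simp [h₁])
    (FreeGroup.ext_hom _ _ fun p => by simp [h₂]), hrel, fun z => ?_⟩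
  have : FreeGroup.lift y = (FreeGroup.lift x).comp (FreeGroup.lift f) :=
    FreeGroup.ext_hom _ _ fun p => by simp [hy]
  exact DFunLike.congr_fun this z

lemma lift_orientableRel {G : Type*} [Group G] (f : Fin g × Bool → G) :
    FreeGroup.lift f (orientableRel g) = ((List.finRange g).map fun i =>
      f (i, false) * f (i, true) * (f (i, false))⁻¹ * (f (i, true))⁻¹).prod := by
  simp [orientableRel, map_list_prod, Function.comp_def]

/-- A product over `Fin g` in a noncommutative group only depends on the product of two adjacent
factors. -/
lemma prod_congr_adjacent {G : Type*} [Group G] : ∀ {g : ℕ} (i j : Fin g), j.val = i.val + 1 →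
    ∀ h h' : Fin g → G, (∀ k, k ≠ i → k ≠ j → h k = h' k) → h i * h j = h' i * h' j →
    ((List.finRange g).map h).prod = ((List.finRange g).map h').prod
  | 0, i, _, _, _, _, _, _ => i.elim0
  | n + 1, i, j, hij, h, h', hk, hp => by
    induction j using Fin.cases with
    | zero => simp at hij
    | succ j =>
    induction i using Fin.cases with
    | zero =>
      obtain ⟨m, rfl⟩ : ∃ m, n = m + 1 := ⟨n - 1, by have := j.isLt; omega⟩
      obtain rfl : j = 0 := by ext; simpa using hij
      have key : ∀ k : Fin m, h k.succ.succ = h' k.succ.succ := fun k =>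
        hk _ (Fin.succ_ne_zero _) (by simp [Fin.ext_iff])
      simp only [List.finRange_succ, List.map_cons, List.map_map, List.prod_cons, ← mul_assoc, hp]
      simp only [Function.comp_def, key]
    | succ i =>
      simp only [List.finRange_succ, List.map_cons, List.map_map, List.prod_cons]
      rw [hk 0 (Fin.succ_ne_zero _).symm (Fin.succ_ne_zero _).symm]
      congr 1
      refine prod_congr_adjacent i j (by simpa using hij) (h ∘ Fin.succ) (h' ∘ Fin.succ) ?_ hp
      intro k h1 h2
      exact hk _ (by simpa using h1) (by simpa using h2)

/-! ### Twists inside one handle -/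

/-- The Dehn twist `a_i ↦ a_i b_i`. -/
lemma twistEquiv_twistA (i : Fin g) (x : Fin g × Bool → C2) :
    TwistEquiv x (Function.update x (i, false) (x (i, false) * x (i, true))) := by
  refine twistEquiv_of_inverse
    (Function.update FreeGroup.of (i, false) (FreeGroup.of (i, false) * FreeGroup.of (i, true)))
    (Function.update FreeGroup.of (i, false)
      (FreeGroup.of (i, false) * (FreeGroup.of (i, true))⁻¹)) ?_ ?_ ?_ ?_
  · intro p
    by_cases h : p = (i, false)
    · subst h; simp
    · simp [h]
  · intro p
    by_cases h : p = (i, false)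
    · subst h; simp
    · simp [h]
  · rw [lift_orientableRel, orientableRel]
    congr 2
    funext k
    by_cases h : k = i
    · subst h; simp [mul_assoc]
    · simp [h]
  · intro p
    by_cases h : p = (i, false)
    · subst h; simp
    · simp [h]

/-- The Dehn twist `b_i ↦ b_i a_i`. -/
lemma twistEquiv_twistB (i : Fin g) (x : Fin g × Bool → C2) :
    TwistEquiv x (Function.update x (i, true) (x (i, true) * x (i, false))) := by
  refine twistEquiv_of_inverse
    (Function.update FreeGroup.of (i, true) (FreeGroup.of (i, true) * FreeGroup.of (i, false)))
    (Function.update FreeGroup.of (i, true)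
      (FreeGroup.of (i, true) * (FreeGroup.of (i, false))⁻¹)) ?_ ?_ ?_ ?_
  · intro p
    by_cases h : p = (i, true)
    · subst h; simp
    · simp [h]
  · intro p
    by_cases h : p = (i, true)
    · subst h; simp
    · simp [h]
  · rw [lift_orientableRel, orientableRel]
    congr 2
    funext k
    by_cases h : k = i
    · subst h; simp [mul_assoc]
    · simp [h]
  · intro p
    by_cases h : p = (i, true)
    · subst h; simp
    · simp [h]

/-! ### The twist joining two adjacent handles -/

/-- The images of the generators under the substitution `b ↦ v b`, `c ↦ v c v⁻¹`, `d ↦ d v⁻¹` on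
the handles `(a, b)` of index `i` and `(c, d)` of index `j`. -/
def joinFun {G : Type*} [Group G] (i j : Fin g) (v : G) (x : Fin g × Bool → G) :
    Fin g × Bool → G :=
  Function.update (Function.update (Function.update x (i, true) (v * x (i, true)))
    (j, false) (v * x (j, false) * v⁻¹)) (j, true) (x (j, true) * v⁻¹)

/-- The element `u = b a⁻¹ b⁻¹ c` represented by a simple closed curve running through the
handles `i` and `j`. -/
def curve (i j : Fin g) : FreeGroup (Fin g × Bool) :=
  FreeGroup.of (i, true) * (FreeGroup.of (i, false))⁻¹ * (FreeGroup.of (i, true))⁻¹ *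
    FreeGroup.of (j, false)

section joinFun

variable {G : Type*} [Group G] {i j : Fin g} (v : G) (x : Fin g × Bool → G)

lemma joinFun_ia (hij : i ≠ j) : joinFun i j v x (i, false) = x (i, false) := by
  simp [joinFun, hij]

lemma joinFun_ib (hij : i ≠ j) : joinFun i j v x (i, true) = v * x (i, true) := by
  simp [joinFun, hij]

lemma joinFun_ja : joinFun i j v x (j, false) = v * x (j, false) * v⁻¹ := by
  simp [joinFun]

lemma joinFun_jb : joinFun i j v x (j, true) = x (j, true) * v⁻¹ := by
  simp [joinFun]

lemma joinFun_other {k : Fin g} (hi : k ≠ i) (hj : k ≠ j) (b : Bool) :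
    joinFun i j v x (k, b) = x (k, b) := by
  simp [joinFun, hi, hj]

end joinFun

lemma lift_joinFun_curve {i j : Fin g} (hij : i ≠ j) (v : FreeGroup (Fin g × Bool)) :
    FreeGroup.lift (joinFun i j v FreeGroup.of) (curve i j) = v * curve i j * v⁻¹ := by
  simp [curve, joinFun_ia, joinFun_ib, joinFun_ja, hij, mul_assoc]

/-- The substitutions along `v` and along `v⁻¹` are inverse to each other, provided the one along
`v⁻¹` fixes `v`. -/
lemma lift_joinFun_joinFun {i j : Fin g} (hij : i ≠ j) {v w : FreeGroup (Fin g × Bool)}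
    (hw : w = v⁻¹) (hv : FreeGroup.lift (joinFun i j w FreeGroup.of) v = v) (p : Fin g × Bool) :
    FreeGroup.lift (joinFun i j w FreeGroup.of) (joinFun i j v FreeGroup.of p) =
      FreeGroup.of p := by
  obtain ⟨k, b⟩ := p
  by_cases hi : k = i
  · subst hi
    cases b
    · simp [joinFun_ia, hij]
    · rw [joinFun_ib _ _ hij, map_mul, hv, FreeGroup.lift_apply_of, joinFun_ib _ _ hij, hw]
      group
  · by_cases hj : k = j
    · subst hj
      cases b
      · rw [joinFun_ja, map_mul, map_mul, map_inv, hv, FreeGroup.lift_apply_of,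
          joinFun_ja, hw]
        group
      · rw [joinFun_jb, map_mul, map_inv, hv, FreeGroup.lift_apply_of, joinFun_jb, hw]
        group
    · simp [joinFun_other, hi, hj]

/-- The Dehn twist along `curve i j` for adjacent handles. -/
lemma twistEquiv_join {i j : Fin g} (hij : j.val = i.val + 1) (x : Fin g × Bool → C2) :
    TwistEquiv x (joinFun i j (x (i, false) * x (j, false)) x) := by
  have hne : i ≠ j := by rintro rfl; omega
  refine twistEquiv_of_inverse (joinFun i j (curve i j) FreeGroup.of)
    (joinFun i j (curve i j)⁻¹ FreeGroup.of) ?_ ?_ ?_ ?_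
  · refine lift_joinFun_joinFun hne rfl ?_
    rw [lift_joinFun_curve hne]
    group
  · refine lift_joinFun_joinFun hne (inv_inv _).symm ?_
    rw [map_inv, lift_joinFun_curve hne]
    group
  · rw [lift_orientableRel, orientableRel]
    refine prod_congr_adjacent i j hij _ _ (fun k hi hj => ?_) ?_
    · simp [joinFun_other, hi, hj]
    · simp only [joinFun_ia _ _ hne, joinFun_ib _ _ hne, joinFun_ja, joinFun_jb, curve]
      group
  · have hu : FreeGroup.lift x (curve i j) = x (i, false) * x (j, false) := by
      simp only [curve, map_mul, map_inv, FreeGroup.lift_apply_of]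
      generalize x (i, false) = a, x (i, true) = b, x (j, false) = c
      revert a b c; decide
    rintro ⟨k, b⟩
    by_cases hi : k = i
    · subst hi
      cases b
      · simp [joinFun_ia, hne]
      · simp [joinFun_ib, hne, hu]
    · by_cases hj : k = j
      · subst hj
        cases b
        · simp [joinFun_ja, hu]
        · simp [joinFun_jb, hu]
      · simp [joinFun_other, hi, hj]

/-! ### Reduction to the standard assignment -/

/-- A nontrivial handle can be normalised to `(t, 1)` without changing the other handles. -/
lemma exists_handle_a (i : Fin g) (x : Fin g × Bool → C2) (b : Bool) (hx : x (i, b) ≠ 1) :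
    ∃ y, TwistEquiv x y ∧ y (i, false) = t ∧ y (i, true) = 1 ∧
      ∀ k b, k ≠ i → y (k, b) = x (k, b) := by
  -- The case `(t, t)` needs one twist, and `(1, t)` is first brought to `(t, t)`.
  have key : ∀ x : Fin g × Bool → C2, x (i, false) = t → x (i, true) = t →
      ∃ y, TwistEquiv x y ∧ y (i, false) = t ∧ y (i, true) = 1 ∧
        ∀ k b, k ≠ i → y (k, b) = x (k, b) := fun x ha hb =>
    ⟨_, twistEquiv_twistB i x, by simp [ha], by simp [ha, hb]; decide,
      fun k b hk => by simp [hk]⟩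
  by_cases ha : x (i, false) = 1
  · have hb : x (i, true) = t := by
      cases b
      · exact absurd ha hx
      · exact eq_t hx
    obtain ⟨y, hy, h1, h2, h3⟩ :=
      key (Function.update x (i, false) (x (i, false) * x (i, true)))
        (by simp [ha, hb]) (by simp [hb])
    exact ⟨y, (twistEquiv_twistA i x).trans hy, h1, h2, fun k b hk => by simp [h3 k b hk, hk]⟩
  · by_cases hb : x (i, true) = 1
    · exact ⟨x, TwistEquiv.refl x, eq_t ha, hb, fun _ _ _ => rfl⟩
    · exact key x (eq_t ha) (eq_t hb)

/-- A nontrivial handle can be normalised to `(1, t)` without changing the other handles. -/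
lemma exists_handle_b (i : Fin g) (x : Fin g × Bool → C2) (b : Bool) (hx : x (i, b) ≠ 1) :
    ∃ y, TwistEquiv x y ∧ y (i, false) = 1 ∧ y (i, true) = t ∧
      ∀ k b, k ≠ i → y (k, b) = x (k, b) := by
  obtain ⟨y, hy, h1, h2, h3⟩ := exists_handle_a i x b hx
  refine ⟨_, (hy.trans (twistEquiv_twistB i y)).trans (twistEquiv_twistA i _), ?_, ?_, ?_⟩
  · simp [h1, h2]; decide
  · simp [h1, h2]
  · intro k b hk
    simp [hk, h3]

/-- For adjacent handles that are both nontrivial, normalised to `(t, 1)` and `(1, t)`, the twist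
joining them gives `(t, t)` and `(1, 1)`. -/
lemma exists_clear_of_both {i j : Fin g} (hij : j.val = i.val + 1) (x : Fin g × Bool → C2)
    (b b' : Bool) (hi : x (i, b) ≠ 1) (hj : x (j, b') ≠ 1) :
    ∃ y, TwistEquiv x y ∧ y (i, false) ≠ 1 ∧ (∀ b, y (j, b) = 1) ∧
      ∀ k b, k ≠ i → k ≠ j → y (k, b) = x (k, b) := by
  have hne : i ≠ j := by rintro rfl; omega
  obtain ⟨y, hy, y1, y2, y3⟩ := exists_handle_a i x b hi
  obtain ⟨z, hz, z1, z2, z3⟩ := exists_handle_b j y b' (by rwa [y3 _ _ hne.symm])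
  refine ⟨_, (hy.trans hz).trans (twistEquiv_join hij z), ?_, ?_, ?_⟩
  · rw [joinFun_ia _ _ hne, z3 _ _ hne, y1]
    decide
  · rintro (_ | _)
    · rw [joinFun_ja, z1, z3 _ _ hne, y1]
      decide
    · rw [joinFun_jb, z1, z2, z3 _ _ hne, y1]
      decide
  · intro k b h1 h2
    rw [joinFun_other _ _ h1 h2, z3 _ _ h2, y3 _ _ h1]

/-- A nontrivial handle can be cleared at the expense of the preceding one. -/
lemma exists_clear_handle {i j : Fin g} (hij : j.val = i.val + 1) (x : Fin g × Bool → C2)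
    (b : Bool) (hj : x (j, b) ≠ 1) :
    ∃ y, TwistEquiv x y ∧ y (i, false) ≠ 1 ∧ (∀ b, y (j, b) = 1) ∧
      ∀ k b, k ≠ i → k ≠ j → y (k, b) = x (k, b) := by
  have hne : i ≠ j := by rintro rfl; omega
  by_cases hi : ∃ b, x (i, b) ≠ 1
  · obtain ⟨b', hi⟩ := hi
    exact exists_clear_of_both hij x b' b hi hj
  · push Not at hi
    -- The joining twist turns `(1, 1)`, `(t, 1)` into `(1, t)`, `(t, t)`.
    obtain ⟨y, hy, y1, y2, y3⟩ := exists_handle_a j x b hj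
    have hv : y (i, false) * y (j, false) = t := by simp [y1, y3 _ _ hne, hi]
    obtain ⟨z, hz, z1, z2, z3⟩ := exists_clear_of_both hij
      (joinFun i j (y (i, false) * y (j, false)) y) true true
      (by rw [joinFun_ib _ _ hne, hv, y3 _ _ hne, hi]; decide)
      (by rw [joinFun_jb, hv, y2]; decide)
    refine ⟨z, (hy.trans (twistEquiv_join hij y)).trans hz, z1, z2, fun k b h1 h2 => ?_⟩
    rw [z3 _ _ h1 h2, joinFun_other _ _ h1 h2, y3 _ _ h2]

/-- The assignment sending `a₁` to the nontrivial element and every other generator to `1`. -/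
def stdVec (g : ℕ) : Fin g × Bool → C2 :=
  fun p => if p.1.val = 0 ∧ p.2 = false then t else 1

/-- Induction on a bound `n` for the indices of the nontrivial handles. -/
lemma twistEquiv_stdVec (n : ℕ) (x : Fin g × Bool → C2)
    (hn : ∀ k b, n < k.val → x (k, b) = 1) (hx : ∃ p, x p ≠ 1) : TwistEquiv x (stdVec g) := by
  induction n generalizing x with
  | zero =>
    obtain ⟨⟨i, b⟩, hx⟩ := hx
    have hi : i.val = 0 := by
      by_contra h
      exact hx (hn i b (Nat.pos_of_ne_zero h))
    obtain ⟨y, hy, y1, y2, y3⟩ := exists_handle_a i x b hx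
    convert hy using 1
    funext ⟨k, c⟩
    by_cases hk : k = i
    · subst hk
      cases c
      · simp [stdVec, hi, y1]
      · simp [stdVec, y2]
    · have hk0 : k.val ≠ 0 := fun h => hk (Fin.ext (h.trans hi.symm))
      rw [y3 _ _ hk, hn k c (Nat.pos_of_ne_zero hk0)]
      simp [stdVec, hk0]
  | succ n ih =>
    by_cases h : ∃ j : Fin g, j.val = n + 1 ∧ ∃ b, x (j, b) ≠ 1
    · obtain ⟨j, hj, b, hb⟩ := h
      obtain ⟨y, hy, y1, y2, y3⟩ :=
        exists_clear_handle (i := ⟨n, by omega⟩) (j := j) hj x b hb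
      refine hy.trans (ih y (fun k c hk => ?_) ⟨_, y1⟩)
      by_cases hkj : k = j
      · subst hkj; exact y2 c
      · have : k.val ≠ n + 1 := fun h => hkj (Fin.ext (h.trans hj.symm))
        rw [y3 k c (by rintro rfl; simp at hk) hkj]
        exact hn k c (by omega)
    · push Not at h
      refine ih x (fun k c hk => ?_) hx
      by_cases hk' : k.val = n + 1
      · exact h k hk' c
      · exact hn k c (by omega)

/-! ### Homomorphisms from the surface group -/

/-- The values on generators of a homomorphism from the surface group. -/
def vals (φ : OrientableSurfaceGroup g →* C2) : Fin g × Bool → C2 :=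
  fun p => φ (PresentedGroup.of p)

lemma lift_vals (φ : OrientableSurfaceGroup g →* C2) (z : FreeGroup (Fin g × Bool)) :
    FreeGroup.lift (vals φ) z = φ (PresentedGroup.mk _ z) := by
  have : FreeGroup.lift (vals φ) = φ.comp (PresentedGroup.mk _) :=
    FreeGroup.ext_hom _ _ fun p => by simp [vals, PresentedGroup.of]
  exact DFunLike.congr_fun this z

lemma vals_twistEquiv_stdVec (φ : OrientableSurfaceGroup g →* C2) (hφ : Function.Surjective φ) :
    TwistEquiv (vals φ) (stdVec g) := by
  refine twistEquiv_stdVec g _ (fun k b hk => absurd k.isLt (by omega)) ?_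
  by_contra! h
  have h1 : φ = 1 := PresentedGroup.ext fun p => h p
  obtain ⟨s, hs⟩ := hφ t
  rw [h1] at hs
  exact absurd hs (show (1 : C2) ≠ t by decide)

end SurfaceTwist

/-- for `g ≥ 1`, any two surjective homomorphisms from `S_g` to the group
of order 2 differ by an automorphism of `S_g`. -/
theorem surface_group_surjections_to_Z2_equivalent (g : ℕ) (hg : 1 ≤ g)
    (φ ψ : OrientableSurfaceGroup g →* Multiplicative (ZMod 2))
    (hφ : Function.Surjective φ) (hψ : Function.Surjective ψ) :
    ∃ α : OrientableSurfaceGroup g ≃* OrientableSurfaceGroup g,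
      ∀ x, φ x = ψ (α x) := by
  obtain ⟨α, hα, h⟩ := (SurfaceTwist.vals_twistEquiv_stdVec φ hφ).trans
    (SurfaceTwist.vals_twistEquiv_stdVec ψ hψ).symm
  have hN : (Subgroup.normalClosure {orientableRel g}).map α.toMonoidHom =
      Subgroup.normalClosure {orientableRel g} := by
    rw [Subgroup.map_normalClosure _ _ α.surjective]
    simp [hα]
  refine ⟨QuotientGroup.congr _ _ α hN, fun s => ?_⟩
  obtain ⟨z, rfl⟩ := PresentedGroup.mk_surjective _ s
  have hz := h z
  rw [SurfaceTwist.lift_vals, SurfaceTwist.lift_vals] at hz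
  exact hz
end

section
/- Let g ≥ 0, n ≥ 1, and let μ₁, …, μ_n be integers with each μᵢ ≥ 2. Let G be the presented group with generators a₁, b₁, …, a_g, b_g, c₁, …, c_n and relations c₁^{μ₁}, …, c_n^{μ_n} together with [a₁,b₁]⋯[a_g,b_g]·c₁·c₂⋯c_n (an orientable Fuchsian group without boundary). If G is infinite, then for each i the image of the generator cᵢ in G has order exactly μᵢ. -/
/-!
The relation `c_i ^ μ_i` bounds the order of `c_i` by `μ_i`, so it suffices to map the group to some
group in which `c_i` has order `μ_i`.

* If `g ≥ 1`, send every generator other than `a_1, b_1, c_i` to `1` and use that in the dihedral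
  group of order `4m` the commutator of the rotation `r 1` and a reflection is `r 2`, of order `m`
  (`exists_hom_of_genus_pos`).
* If `g = 0` and `n ≥ 3`, send all but three of the generators, `c_i` being one of the three, to
  `1` (`exists_hom_of_triple`). This reduces the claim to the triangle groups
  (`exists_triangle`): an upper and a lower triangular matrix in `SL(2, ℂ)` whose traces, and the
  trace of whose product, are prescribed as `2 cos (π / p)`, `2 cos (π / q)`, `2 cos (π / r)`
  give elements of `PSL(2, ℂ)` of the required orders.
* If `g = 0` and `n ≤ 2`, the group is generated by `c_1`, hence finite
  (`fuchs_finite_of_genus_zero`). This is the only place where infiniteness matters.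
-/

/-- Generators of the Fuchsian group: `a_i = Sum.inl (i, false)`, `b_i = Sum.inl (i, true)`
for `i : Fin g`, and `c_j = Sum.inr j` for `j : Fin n`. -/
abbrev FuchsGen (g n : ℕ) : Type := (Fin g × Bool) ⊕ Fin n

/-- The long relation `[a₁,b₁]⋯[a_g,b_g]·c₁·c₂⋯c_n`. -/
def fuchsLongRel (g n : ℕ) : FreeGroup (FuchsGen g n) :=
  (((List.finRange g).map fun i =>
    FreeGroup.of (Sum.inl (i, false)) * FreeGroup.of (Sum.inl (i, true)) *
      (FreeGroup.of (Sum.inl (i, false)))⁻¹ * (FreeGroup.of (Sum.inl (i, true)))⁻¹)).prod *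
  (((List.finRange n).map fun j => FreeGroup.of (Sum.inr j : FuchsGen g n))).prod

/-- The relation set: the powers `c_j^{μ j}` together with the long relation. -/
def fuchsRels (g n : ℕ) (μ : Fin n → ℕ) : Set (FreeGroup (FuchsGen g n)) :=
  (Set.range fun j : Fin n => FreeGroup.of (Sum.inr j : FuchsGen g n) ^ μ j) ∪
    {fuchsLongRel g n}

/-- The orientable Fuchsian group without boundary,
`⟨a₁,b₁,…,a_g,b_g,c₁,…,c_n ∣ c₁^{μ₁},…,c_n^{μ_n}, [a₁,b₁]⋯[a_g,b_g]c₁⋯c_n⟩`. -/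
abbrev FuchsianGroup (g n : ℕ) (μ : Fin n → ℕ) : Type :=
  PresentedGroup (fuchsRels g n μ)

/-! ### Triangle groups in `PSL(2, ℂ)` -/

open Matrix in
/-- The powers of a matrix in `SL(2, ℂ)` with eigenvalues `u, v`, from the Cayley–Hamilton
relation `M ^ 2 = (u + v) M - 1`. -/
lemma sl2_smul_pow {u v : ℂ} (huv : u * v = 1) (M : SpecialLinearGroup (Fin 2) ℂ)
    (hM : M.1 0 0 + M.1 1 1 = u + v) (k : ℕ) :
    (u - v) • (M.1 ^ (k + 1)) =
      (u ^ (k + 1) - v ^ (k + 1)) • M.1 - (u ^ k - v ^ k) • (1 : Matrix (Fin 2) (Fin 2) ℂ) := by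
  have hsq : M.1 * M.1 = (u + v) • M.1 - 1 := by
    have hdet := M.2
    rw [Matrix.det_fin_two] at hdet
    rw [← hM]
    ext i j
    fin_cases i <;> fin_cases j <;> simp [Matrix.mul_apply, Fin.sum_univ_two] <;>
      first | ring1 | linear_combination -hdet
  induction k with
  | zero => simp
  | succ k ih =>
    rw [pow_succ, ← smul_mul_assoc, ih, sub_mul, smul_mul_assoc, hsq, smul_mul_assoc, one_mul]
    have h1 : u ^ (k + 1 + 1) - v ^ (k + 1 + 1) =
        (u ^ (k + 1) - v ^ (k + 1)) * (u + v) - (u ^ k - v ^ k) := by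
      linear_combination (-(u ^ k) + v ^ k) * huv
    rw [h1]
    module

/-- An element of `SL(2, ℂ)` with eigenvalues `u, v = u⁻¹`, where `u ≠ v`, has a power equal to
`± 1` as soon as the corresponding powers of `u` and `v` agree. -/
lemma sl2_pow_mem_center {u v : ℂ} (huv : u * v = 1) (hne : u ≠ v)
    (M : Matrix.SpecialLinearGroup (Fin 2) ℂ)
    (hM : M.1 0 0 + M.1 1 1 = u + v) {k : ℕ} (hk : u ^ (k + 1) = v ^ (k + 1)) :
    M ^ (k + 1) ∈ Subgroup.center (Matrix.SpecialLinearGroup (Fin 2) ℂ) := by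
  rw [Subgroup.mem_center_iff]
  intro B
  apply Subtype.ext
  have h := sl2_smul_pow huv M hM k
  rw [hk, sub_self, zero_smul, zero_sub] at h
  refine smul_right_injective _ (sub_ne_zero.2 hne) ?_
  simp only [Matrix.SpecialLinearGroup.coe_mul, Matrix.SpecialLinearGroup.coe_pow]
  rw [← mul_smul_comm, ← smul_mul_assoc, h]
  simp

lemma sl2_pow_eq_of_mem_center {u v : ℂ} (huv : u * v = 1)
    (M : Matrix.SpecialLinearGroup (Fin 2) ℂ)
    (hM : M.1 0 0 + M.1 1 1 = u + v) (h01 : M.1 0 1 ≠ 0) {k : ℕ}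
    (hk : M ^ (k + 1) ∈ Subgroup.center (Matrix.SpecialLinearGroup (Fin 2) ℂ)) :
    u ^ (k + 1) = v ^ (k + 1) := by
  obtain ⟨r, -, hr⟩ := Matrix.SpecialLinearGroup.mem_center_iff.1 hk
  have h := congrFun (congrFun (sl2_smul_pow huv M hM k) 0) 1
  rw [← Matrix.SpecialLinearGroup.coe_pow, ← hr] at h
  simp [h01] at h
  exact sub_eq_zero.1 h

/-- A half-angle root of unity: `u = exp (π i / p)`, whose powers agree with those of its inverse
exactly at the multiples of `p`. -/
lemma exists_halfRoot {p : ℕ} (hp : 2 ≤ p) :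
    ∃ u v : ℂ, u * v = 1 ∧ u ≠ v ∧ ∀ k, u ^ k = v ^ k ↔ p ∣ k := by
  have h := Complex.isPrimitiveRoot_exp (2 * p) (by omega)
  set u := Complex.exp (2 * Real.pi * Complex.I / ((2 * p : ℕ) : ℂ)) with hu
  have hu0 : u ≠ 0 := Complex.exp_ne_zero _
  have key : ∀ k, u ^ k = u⁻¹ ^ k ↔ p ∣ k := by
    intro k
    rw [inv_pow, ← mul_eq_one_iff_eq_inv₀ (pow_ne_zero _ hu0), ← pow_add, ← two_mul,
      h.pow_eq_one_iff_dvd, Nat.mul_dvd_mul_iff_left two_pos]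
  refine ⟨u, u⁻¹, mul_inv_cancel₀ hu0, fun h1 => ?_, key⟩
  have := (key 1).1 (by simpa using h1)
  have := Nat.le_of_dvd one_pos this
  omega

/-- For `p, q, r ≥ 2`, the element `x` of the triangle group
`⟨x, y, z ∣ x ^ p, y ^ q, z ^ r, x * y * z⟩` has order `p` already in its image in `PSL(2, ℂ)`. -/
lemma exists_triangle {p q r : ℕ} (hp : 2 ≤ p) (hq : 2 ≤ q) (hr : 2 ≤ r) :
    ∃ x y z : Matrix.ProjectiveSpecialLinearGroup (Fin 2) ℂ,
      orderOf x = p ∧ y ^ q = 1 ∧ z ^ r = 1 ∧ x * y * z = 1 := by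
  obtain ⟨a, a', haa, hane, ha⟩ := exists_halfRoot hp
  obtain ⟨b, b', hbb, hbne, hb⟩ := exists_halfRoot hq
  obtain ⟨c, c', hcc, hcne, hc⟩ := exists_halfRoot hr
  let X : Matrix.SpecialLinearGroup (Fin 2) ℂ := ⟨!![a, 1; 0, a'], by simp [haa]⟩
  -- The lower left entry of `Y` makes the trace of `X * Y` equal to `c + c'`.
  let Y : Matrix.SpecialLinearGroup (Fin 2) ℂ :=
    ⟨!![b, 0; c + c' - a * b - a' * b', b'], by simp [hbb]⟩
  have mkpow : ∀ (M : Matrix.SpecialLinearGroup (Fin 2) ℂ) (k : ℕ),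
      (M : Matrix.ProjectiveSpecialLinearGroup (Fin 2) ℂ) ^ k = 1 ↔
        M ^ k ∈ Subgroup.center (Matrix.SpecialLinearGroup (Fin 2) ℂ) := fun M k => by
    rw [← QuotientGroup.eq_one_iff]; rfl
  have hX : X.1 0 0 + X.1 1 1 = a + a' := by simp [X]
  have hY : Y.1 0 0 + Y.1 1 1 = b + b' := by simp [Y]
  have hXY : (X * Y).1 0 0 + (X * Y).1 1 1 = c + c' := by
    rw [Matrix.SpecialLinearGroup.coe_mul]
    simp [X, Y, Matrix.mul_apply, Fin.sum_univ_two]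
    ring
  refine ⟨X, Y, ((X * Y : Matrix.SpecialLinearGroup (Fin 2) ℂ) :
      Matrix.ProjectiveSpecialLinearGroup (Fin 2) ℂ)⁻¹, ?_, ?_, ?_, ?_⟩
  · refine Nat.dvd_antisymm (orderOf_dvd_of_pow_eq_one ?_) ?_
    · obtain ⟨k, rfl⟩ : ∃ k, p = k + 1 := ⟨p - 1, by omega⟩
      exact (mkpow _ _).2 (sl2_pow_mem_center haa hane X hX ((ha _).2 dvd_rfl))
    · have h := (mkpow _ _).1 (pow_orderOf_eq_one
        (X : Matrix.ProjectiveSpecialLinearGroup (Fin 2) ℂ))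
      revert h
      cases orderOf (X : Matrix.ProjectiveSpecialLinearGroup (Fin 2) ℂ) with
      | zero => simp
      | succ k => exact fun h => (ha _).1 (sl2_pow_eq_of_mem_center haa X hX (by simp [X]) h)
  · obtain ⟨k, rfl⟩ : ∃ k, q = k + 1 := ⟨q - 1, by omega⟩
    exact (mkpow _ _).2 (sl2_pow_mem_center hbb hbne Y hY ((hb _).2 dvd_rfl))
  · obtain ⟨k, rfl⟩ : ∃ k, r = k + 1 := ⟨r - 1, by omega⟩
    rw [inv_pow, inv_eq_one]
    exact (mkpow _ _).2 (sl2_pow_mem_center hcc hcne (X * Y) hXY ((hc _).2 dvd_rfl))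
  · exact mul_inv_cancel _

/-! ### Homomorphisms out of the Fuchsian group -/

lemma fuchs_of_pow {g n : ℕ} {μ : Fin n → ℕ} (i : Fin n) :
    PresentedGroup.of (rels := fuchsRels g n μ) (Sum.inr i) ^ μ i = 1 :=
  PresentedGroup.one_of_mem (rels := fuchsRels g n μ) (Or.inl ⟨i, rfl⟩)

/-- The universal property of the Fuchsian group: the images of the generators are arbitrary,
subject to the defining relations. -/
lemma exists_fuchs_hom {H : Type*} [Group H] {g n : ℕ} {μ : Fin n → ℕ} (a b : Fin g → H)
    (c : Fin n → H) (hc : ∀ i, c i ^ μ i = 1)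
    (h : ((List.finRange g).map fun i => a i * b i * (a i)⁻¹ * (b i)⁻¹).prod *
      ((List.finRange n).map c).prod = 1) :
    ∃ φ : FuchsianGroup g n μ →* H, ∀ i, φ (PresentedGroup.of (Sum.inr i)) = c i := by
  let f : FuchsGen g n → H := Sum.elim (fun t => if t.2 then b t.1 else a t.1) c
  refine ⟨PresentedGroup.toGroup (f := f) ?_, fun i => by
    rw [PresentedGroup.toGroup.of]; rfl⟩
  rintro _ (⟨i, rfl⟩ | rfl)
  · simpa [f] using hc i
  · simpa [fuchsLongRel, map_list_prod, Function.comp_def, f] using h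

/-- In positive genus the commutator `[a₁, b₁]` can absorb `c_i`: the group maps to the dihedral
group of order `4 μ_i`, with `c_i` going to a rotation of order `μ_i`. -/
lemma exists_hom_of_genus_pos {g n : ℕ} (hg : 0 < g) {μ : Fin n → ℕ} (i : Fin n) (hi : 0 < μ i) :
    ∃ φ : FuchsianGroup g n μ →* DihedralGroup (2 * μ i),
      orderOf (φ (PresentedGroup.of (Sum.inr i))) = μ i := by
  obtain ⟨g, rfl⟩ : ∃ k, g = k + 1 := ⟨g - 1, by omega⟩
  have hord : orderOf ((DihedralGroup.r 2 : DihedralGroup (2 * μ i))⁻¹) = μ i := by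
    have h2 : (DihedralGroup.r 2 : DihedralGroup (2 * μ i)) = DihedralGroup.r 1 ^ 2 := by
      simp
    rw [orderOf_inv, h2, orderOf_pow_of_dvd two_ne_zero (by simp), DihedralGroup.orderOf_r_one]
    omega
  obtain ⟨φ, hφ⟩ : ∃ φ : FuchsianGroup (g + 1) n μ →* DihedralGroup (2 * μ i),
      ∀ j, φ (PresentedGroup.of (Sum.inr j)) =
        (Pi.mulSingle i (DihedralGroup.r 2)⁻¹ : Fin n → DihedralGroup (2 * μ i)) j := by
    refine exists_fuchs_hom (fun k => if k = 0 then DihedralGroup.r 1 else 1)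
      (fun k => if k = 0 then DihedralGroup.sr 0 else 1) _ (fun j => ?_) ?_
    · rcases eq_or_ne j i with rfl | hj
      · rw [Pi.mulSingle_eq_same]
        exact orderOf_dvd_iff_pow_eq_one.1 hord.dvd
      · rw [Pi.mulSingle_eq_of_ne hj, one_pow]
    · rw [List.prod_map_eq_pow_single i _ fun j hj _ => Pi.mulSingle_eq_of_ne hj _,
        List.prod_map_eq_pow_single 0 _ fun j hj _ => by simp [hj],
        List.count_eq_one_of_mem (List.nodup_finRange _) (List.mem_finRange _),
        List.count_eq_one_of_mem (List.nodup_finRange _) (List.mem_finRange _)]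
      simp
      norm_num
  exact ⟨φ, by rw [hφ, Pi.mulSingle_eq_same, hord]⟩

/-- Three of the generators `c_j` can be sent to any `x, y, z` with `x * y * z = 1` whose orders
divide the respective exponents, all other generators going to `1`. -/
lemma exists_hom_of_triple {H : Type*} [Group H] {g n : ℕ} {μ : Fin n → ℕ} {a b c : Fin n}
    (hab : a < b) (hbc : b < c) {x y z : H} (hx : x ^ μ a = 1) (hy : y ^ μ b = 1)
    (hz : z ^ μ c = 1) (h : x * y * z = 1) :
    ∃ φ : FuchsianGroup g n μ →* H, φ (PresentedGroup.of (Sum.inr a)) = x ∧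
      φ (PresentedGroup.of (Sum.inr b)) = y ∧ φ (PresentedGroup.of (Sum.inr c)) = z := by
  have hac := hab.trans hbc
  let f : Fin n → H := fun i => if i = a then x else if i = b then y else if i = c then z else 1
  have fa : f a = x := by simp [f]
  have fb : f b = y := by simp [f, hab.ne']
  have fc : f c = z := by simp [f, hac.ne', hbc.ne']
  have hprod : ((List.finRange n).map f).prod = x * y * z := by
    have hfilter : (List.finRange n).filter (fun i => i = a ∨ i = b ∨ i = c) = [a, b, c] := by
      refine List.Perm.eq_of_pairwise (le := (· < ·)) (fun _ _ _ _ h1 h2 => absurd h1 h2.asymm)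
        ((List.pairwise_lt_finRange n).filter _) (by simp [hab, hbc, hac]) ?_
      rw [List.perm_ext_iff_of_nodup ((List.nodup_finRange n).filter _)
        (by simp [hab.ne, hbc.ne, hac.ne])]
      simp
    have hone : ∀ l : List (Fin n),
        (l.map f).prod = ((l.filter (fun i => i = a ∨ i = b ∨ i = c)).map f).prod := by
      intro l
      induction l with
      | nil => rfl
      | cons i l ih =>
        by_cases hi : i = a ∨ i = b ∨ i = c
        · simp [hi, ih]
        · have : f i = 1 := by
            push Not at hi
            simp [f, hi]
          simp [hi, ih, this]
    rw [hone, hfilter]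
    simp [fa, fb, fc, mul_assoc]
  have hpow : ∀ i, f i ^ μ i = 1 := by
    intro i
    by_cases h1 : i = a
    · rw [h1, fa, hx]
    by_cases h2 : i = b
    · rw [h2, fb, hy]
    by_cases h3 : i = c
    · rw [h3, fc, hz]
    simp [f, h1, h2, h3]
  obtain ⟨φ, hφ⟩ := exists_fuchs_hom (g := g) (fun _ => (1 : H)) (fun _ => 1) f hpow
    (by simp [hprod, h])
  exact ⟨φ, by rw [hφ, fa], by rw [hφ, fb], by rw [hφ, fc]⟩

/-! ### The finite case and the order of `c_i` -/

/-- In genus zero with at most two branch points, the first `c_j`, which has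
finite order, generates the group. -/
lemma fuchs_finite_of_genus_zero {n : ℕ} (hn : 1 ≤ n) (hn2 : n ≤ 2) {μ : Fin n → ℕ}
    (hμ : ∀ i, 0 < μ i) : Finite (FuchsianGroup 0 n μ) := by
  let c : Fin n → FuchsianGroup 0 n μ := fun i => PresentedGroup.of (Sum.inr i)
  have hlong : ((List.finRange n).map c).prod = 1 := by
    have := PresentedGroup.one_of_mem (rels := fuchsRels 0 n μ) (Or.inr rfl)
    simpa [fuchsLongRel, map_list_prod, Function.comp_def, c, PresentedGroup.of] using this
  have hmem : ∀ i, c i ∈ Subgroup.zpowers (c ⟨0, hn⟩) := by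
    intro i
    rcases i with ⟨_ | i, hi⟩
    · exact Subgroup.mem_zpowers _
    · obtain rfl : n = 2 := by omega
      obtain rfl : i = 0 := by omega
      have h2 : c 0 * c 1 = 1 := by simpa [List.finRange_succ] using hlong
      exact (eq_inv_of_mul_eq_one_right h2) ▸ Subgroup.inv_mem _ (Subgroup.mem_zpowers (c 0))
  have htop : Subgroup.zpowers (c ⟨0, hn⟩) = ⊤ := by
    rw [eq_top_iff, ← PresentedGroup.closure_range_of, Subgroup.closure_le]
    rintro _ ⟨⟨⟨i, -⟩⟩ | i, rfl⟩
    · exact i.elim0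
    · exact hmem i
  have hfin : IsOfFinOrder (c ⟨0, hn⟩) :=
    isOfFinOrder_iff_pow_eq_one.2 ⟨_, hμ _, fuchs_of_pow _⟩
  have : Finite (Subgroup.zpowers (c ⟨0, hn⟩)) := finite_zpowers.2 hfin
  rw [htop] at this
  exact Finite.of_equiv _ Subgroup.topEquiv.toEquiv

/-- if the Fuchsian group is infinite, the image of each generator `c_i`
has order exactly `μ i`. -/
theorem fuchsian_generator_order (g n : ℕ) (hn : 1 ≤ n) (μ : Fin n → ℕ)
    (hμ : ∀ i, 2 ≤ μ i) (hinf : Infinite (FuchsianGroup g n μ)) (i : Fin n) :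
    orderOf (PresentedGroup.of (rels := fuchsRels g n μ) (Sum.inr i)) = μ i := by
  have h1 : orderOf (PresentedGroup.of (rels := fuchsRels g n μ) (Sum.inr i)) ∣ μ i :=
    orderOf_dvd_of_pow_eq_one (fuchs_of_pow i)
  refine Nat.dvd_antisymm h1 ?_
  rcases Nat.eq_zero_or_pos g with rfl | hg
  · by_cases hn2 : n ≤ 2
    · exact absurd hinf (not_infinite_iff_finite.2
        (fuchs_finite_of_genus_zero hn hn2 fun i => by have := hμ i; omega))
    · obtain ⟨a, b, c, hab, hbc, hi⟩ : ∃ a b c : Fin n, a < b ∧ b < c ∧ (i = a ∨ i = b ∨ i = c) := by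
        rcases i with ⟨_ | _ | i, hi⟩
        · exact ⟨⟨0, by omega⟩, ⟨1, by omega⟩, ⟨2, by omega⟩, by simp, by simp, by simp⟩
        · exact ⟨⟨0, by omega⟩, ⟨1, by omega⟩, ⟨2, by omega⟩, by simp, by simp, by simp⟩
        · exact ⟨⟨0, by omega⟩, ⟨1, by omega⟩, ⟨i + 2, hi⟩, by simp, by simp, by simp⟩
      -- A triple with `x * y * z = 1` also satisfies `z * x * y = 1` and `y * z * x = 1`, so the
      -- element of controlled order can be put in any of the three positions.
      rcases hi with rfl | rfl | rfl
      · obtain ⟨x, y, z, hx, hy, hz, h⟩ := exists_triangle (hμ i) (hμ b) (hμ c)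
        obtain ⟨φ, ha, -, -⟩ := exists_hom_of_triple (g := 0) (μ := μ) hab hbc
          (hx ▸ pow_orderOf_eq_one x) hy hz h
        rw [← hx, ← ha]
        exact orderOf_map_dvd φ _
      · obtain ⟨x, y, z, hx, hy, hz, h⟩ := exists_triangle (hμ i) (hμ c) (hμ a)
        obtain ⟨φ, -, hb, -⟩ := exists_hom_of_triple (g := 0) (μ := μ) hab hbc
          hz (hx ▸ pow_orderOf_eq_one x) hy (by rw [mul_assoc]; exact mul_eq_one_comm.1 h)
        rw [← hx, ← hb]
        exact orderOf_map_dvd φ _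
      · obtain ⟨x, y, z, hx, hy, hz, h⟩ := exists_triangle (hμ i) (hμ a) (hμ b)
        obtain ⟨φ, -, -, hc⟩ := exists_hom_of_triple (g := 0) (μ := μ) hab hbc
          hy hz (hx ▸ pow_orderOf_eq_one x) (by rw [mul_assoc] at h; exact mul_eq_one_comm.1 h)
        rw [← hx, ← hc]
        exact orderOf_map_dvd φ _
  · obtain ⟨φ, hφ⟩ := exists_hom_of_genus_pos hg (μ := μ) i (by have := hμ i; omega)
    rw [← hφ]
    exact orderOf_map_dvd φ _
end
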